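/- There do not exist real numbers μ₂, μ₃, μ₄ > 0 and signs σ₁, σ₂, σ₃, σ₄ ∈ {−1, 1} such that (μ₂ − 1)(μ₃ − 1)(μ₂ − μ₄)(μ₃ − μ₄) ≠ 0 and simultaneously (μ₃³ + σ₁μ₄³) + σ₂μ₂³(μ₃³ − σ₁μ₄³) = 0, (μ₂³ + σ₃μ₄³) + σ₄μ₃³(μ₂³ − σ₃μ₄³) = 0, μ₂⁶(μ₃² − μ₄²) = μ₃⁶μ₄⁶(1 − μ₂²), and μ₃⁶(μ₂² − μ₄²) = μ₂⁶μ₄⁶(1 − μ₃²). -/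

import Mathlib

/-!
Write `a, b, d` for `μ₂, μ₃, μ₄` and `A, B, D` for their cubes.

The third equation says that `d < b` iff `a < 1`. Among the four sign choices in the first equation
this, together with positivity, leaves only `D (A - 1) = B (A + 1)` when `1 < a`, and
`D (1 + A) = B (1 - A)` when `a < 1` (`branch`). The second and fourth equations give the same with
`a` and `b` exchanged.

* If `a` and `b` lie on the same side of `1`, eliminating `D` gives `A = B`, hence `a = b`. The
  remaining two equations in `a` and `d` contradict each other by a factor `3/4`, because
  `x ^ 3 - y ^ 3 ≤ (3/2) x (x ^ 2 - y ^ 2)` for `x ≥ y ≥ 0`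
  (`false_of_one_lt_of_eq`, `false_of_lt_one_of_eq`).
* If they lie on opposite sides, say `b < 1 < a`, adding the two linear relations gives
  `D (A + B) = A + B`, so `d = 1`. Then `A - 1 = B (A + 1)`, and the third equation fails since its
  two sides have different sizes (`false_of_opposite`).
-/

/-- The inertia equation and positivity determine which sign branch of the cubic equation occurs:
one for `1 < a` and one for `a < 1`. -/
lemma branch {a b d s t : ℝ} (ha : 0 < a) (hb : 0 < b) (hd : 0 < d) (ha1 : a ≠ 1)
    (hs : s = -1 ∨ s = 1) (ht : t = -1 ∨ t = 1)
    (h1 : (b ^ 3 + s * d ^ 3) + t * a ^ 3 * (b ^ 3 - s * d ^ 3) = 0)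
    (h3 : a ^ 6 * (b ^ 2 - d ^ 2) = b ^ 6 * d ^ 6 * (1 - a ^ 2)) :
    (1 < a ∧ b < d ∧ d ^ 3 * (a ^ 3 - 1) = b ^ 3 * (a ^ 3 + 1)) ∨
      (a < 1 ∧ d < b ∧ d ^ 3 * (1 + a ^ 3) = b ^ 3 * (1 - a ^ 3)) := by
  have hA : 0 < a ^ 3 := by positivity
  have hB : 0 < b ^ 3 := by positivity
  have hD : 0 < d ^ 3 := by positivity
  rcases lt_or_gt_of_ne ha1 with h | h
  · right
    have hA1 : a ^ 3 < 1 := pow_lt_one₀ ha.le h (by norm_num)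
    have hdb : d < b := by
      have hpos : 0 < a ^ 6 * (b ^ 2 - d ^ 2) := by
        rw [h3]
        have : 0 < 1 - a ^ 2 := by nlinarith
        positivity
      have := (pos_iff_pos_of_mul_pos hpos).1 (by positivity)
      exact lt_of_pow_lt_pow_left₀ 2 hb.le (by linarith)
    have hDB : d ^ 3 < b ^ 3 := pow_lt_pow_left₀ hdb hd.le (by norm_num)
    refine ⟨h, hdb, ?_⟩
    rcases hs with rfl | rfl <;> rcases ht with rfl | rfl <;>
      nlinarith [mul_pos hA hB, mul_pos hA hD, mul_pos (sub_pos.2 hA1) hB,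
        mul_pos (sub_pos.2 hA1) hD]
  · left
    have hA1 : 1 < a ^ 3 := one_lt_pow₀ h (by norm_num)
    have hbd : b < d := by
      have hpos : 0 < a ^ 6 * (d ^ 2 - b ^ 2) := by
        have h2 : 0 < a ^ 2 - 1 := by nlinarith
        have : 0 < b ^ 6 * d ^ 6 * (a ^ 2 - 1) := by positivity
        linarith
      have := (pos_iff_pos_of_mul_pos hpos).1 (by positivity)
      exact lt_of_pow_lt_pow_left₀ 2 hd.le (by linarith)
    have hBD : b ^ 3 < d ^ 3 := pow_lt_pow_left₀ hbd hb.le (by norm_num)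
    refine ⟨h, hbd, ?_⟩
    rcases hs with rfl | rfl <;> rcases ht with rfl | rfl <;>
      nlinarith [mul_pos hA hB, mul_pos hA hD, mul_pos (sub_pos.2 hA1) hB,
        mul_pos (sub_pos.2 hA1) hD]

lemma cube_sub_cube_le {x y : ℝ} (hy : 0 ≤ y) (hxy : y ≤ x) :
    x ^ 3 - y ^ 3 ≤ 3 / 2 * x * (x ^ 2 - y ^ 2) := by
  -- the difference of the two sides is `(x - y)² (x + 2 y) / 2`
  have : 0 ≤ (x - y) ^ 2 * (x + 2 * y) := mul_nonneg (sq_nonneg _) (by linarith)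
  linarith [show (x - y) ^ 2 * (x + 2 * y) = x ^ 3 + 2 * y ^ 3 - 3 * x * y ^ 2 by ring]

/-- The case `a = b > 1`. -/
lemma false_of_one_lt_of_eq {a d : ℝ} (ha : 1 < a) (had : a < d)
    (h1 : d ^ 3 * (a ^ 3 - 1) = a ^ 3 * (a ^ 3 + 1))
    (h3 : a ^ 6 * (a ^ 2 - d ^ 2) = a ^ 6 * d ^ 6 * (1 - a ^ 2)) : False := by
  have ha0 : 0 < a := by linarith
  have hd0 : 0 < d := by linarith
  have hA1 : 1 < a ^ 3 := one_lt_pow₀ ha (by norm_num)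
  have hD : 0 < d ^ 3 := by positivity
  have h3' : d ^ 2 - a ^ 2 = d ^ 6 * (a ^ 2 - 1) := by
    have := mul_left_cancel₀ (by positivity : a ^ 6 ≠ 0) (h3.trans (mul_assoc _ _ _))
    linarith
  have hc : a ^ 3 - 1 ≤ 3 / 2 * a * (a ^ 2 - 1) := by
    simpa using cube_sub_cube_le zero_le_one ha.le
  have h2 : 2 < d ^ 3 * (a ^ 3 - 1) := by rw [h1]; nlinarith
  -- `2 D < D² (A - 1) ≤ (3/2) a (d² - a²) < (3/2) D`
  have h4 : d ^ 3 * 2 < d ^ 3 * (d ^ 3 * (a ^ 3 - 1)) := mul_lt_mul_of_pos_left h2 hD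
  have h5 : d ^ 6 * (a ^ 3 - 1) ≤ d ^ 6 * (3 / 2 * a * (a ^ 2 - 1)) :=
    mul_le_mul_of_nonneg_left hc (by positivity)
  have h6 : d ^ 6 * (3 / 2 * a * (a ^ 2 - 1)) = 3 / 2 * a * (d ^ 2 - a ^ 2) := by
    rw [h3']; ring
  have h7 : a * d ^ 2 < d * d ^ 2 := mul_lt_mul_of_pos_right had (by positivity)
  nlinarith

/-- The case `a = b < 1`. -/
lemma false_of_lt_one_of_eq {a d : ℝ} (hd : 0 < d) (had : d < a)
    (h1 : d ^ 3 * (1 + a ^ 3) = a ^ 3 * (1 - a ^ 3))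
    (h3 : a ^ 6 * (a ^ 2 - d ^ 2) = a ^ 6 * d ^ 6 * (1 - a ^ 2)) : False := by
  have ha : 0 < a := hd.trans had
  have hD : 0 < d ^ 3 := by positivity
  have hDA : d ^ 3 < a ^ 3 := pow_lt_pow_left₀ had hd.le (by norm_num)
  have h3' : a ^ 2 - d ^ 2 = d ^ 6 * (1 - a ^ 2) :=
    mul_left_cancel₀ (by positivity : a ^ 6 ≠ 0) (h3.trans (mul_assoc _ _ _))
  have hc := cube_sub_cube_le hd.le had.le
  -- `2 D² < A² + A D = A - D ≤ (3/2) a D² (1 - a²)`, while `a (1 - a²) < 1`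
  have h4 : a ^ 3 - d ^ 3 = a ^ 3 * (a ^ 3 + d ^ 3) := by linarith
  have h5 : d ^ 3 * (2 * d ^ 3) < a ^ 3 * (a ^ 3 + d ^ 3) := by nlinarith
  have h6 : a * (1 - a ^ 2) < 1 := by nlinarith [sq_nonneg (a - 1), pow_pos ha 3, sq_nonneg a]
  have h7 : d ^ 6 * (a * (1 - a ^ 2)) < d ^ 6 * 1 := mul_lt_mul_of_pos_left h6 (by positivity)
  rw [h3'] at hc
  nlinarith

/-- The case where `a` and `b` lie on opposite sides of `1`. -/
lemma false_of_opposite {a b d : ℝ} (hb : 0 < b) (hd : 0 < d) (ha1 : 1 < a) (hb1 : b < 1)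
    (h1 : d ^ 3 * (a ^ 3 - 1) = b ^ 3 * (a ^ 3 + 1))
    (h2 : d ^ 3 * (1 + b ^ 3) = a ^ 3 * (1 - b ^ 3))
    (h3 : a ^ 6 * (b ^ 2 - d ^ 2) = b ^ 6 * d ^ 6 * (1 - a ^ 2)) : False := by
  have ha : 0 < a := by linarith
  have hA1 : 1 < a ^ 3 := one_lt_pow₀ ha1 (by norm_num)
  have hD : d ^ 3 = 1 := by
    have : (a ^ 3 + b ^ 3) * d ^ 3 = (a ^ 3 + b ^ 3) * 1 := by linarith
    exact mul_left_cancel₀ (by positivity) this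
  have hd1 : d = 1 := (pow_eq_one_iff_of_nonneg hd.le (by norm_num)).1 hD
  subst hd1
  -- the weighted arithmetic-geometric mean inequality `3 b² ≤ 1 + 2 b³`
  have hc : 2 / 3 * (1 - b ^ 3) ≤ 1 - b ^ 2 := by
    have : 0 ≤ (1 - b) ^ 2 * (1 + 2 * b) := by positivity
    linarith [show (1 - b) ^ 2 * (1 + 2 * b) = 1 + 2 * b ^ 3 - 3 * b ^ 2 by ring]
  have h4 : (1 - b ^ 3) * (a ^ 3 + 1) = 2 := by linarith
  have h5 : a ^ 2 - 1 < a ^ 3 - 1 := by nlinarith [pow_pos ha 2]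
  have h6 : a ^ 6 * (1 - b ^ 2) = b ^ 6 * (a ^ 2 - 1) := by linarith
  -- multiply by `(A + 1)²` and use `B (A + 1) = A - 1`
  have h7 : a ^ 6 * ((1 - b ^ 2) * (a ^ 3 + 1)) * (a ^ 3 + 1) =
      (a ^ 3 - 1) ^ 2 * (a ^ 2 - 1) := by
    rw [show a ^ 3 - 1 = b ^ 3 * (a ^ 3 + 1) by linarith]
    linear_combination (a ^ 3 + 1) ^ 2 * h6
  have h8 : 4 / 3 ≤ (1 - b ^ 2) * (a ^ 3 + 1) := by nlinarith
  have h9 : a ^ 6 * (4 / 3) * (a ^ 3 + 1) ≤ a ^ 6 * ((1 - b ^ 2) * (a ^ 3 + 1)) * (a ^ 3 + 1) := by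
    gcongr
  have h10 : (a ^ 3 - 1) ^ 2 * (a ^ 2 - 1) ≤ (a ^ 3 - 1) ^ 2 * (a ^ 3 - 1) :=
    mul_le_mul_of_nonneg_left h5.le (sq_nonneg _)
  have h11 : (a ^ 3 - 1) ^ 3 < (a ^ 3) ^ 3 :=
    pow_lt_pow_left₀ (by linarith) (by linarith) (by norm_num)
  have h12 : 0 < a ^ 6 := by positivity
  have h13 : 0 < a ^ 9 := by positivity
  linarith [show a ^ 6 * (4 / 3) * (a ^ 3 + 1) = 4 / 3 * a ^ 9 + 4 / 3 * a ^ 6 by ring,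
    show (a ^ 3) ^ 3 = a ^ 9 by ring,
    show (a ^ 3 - 1) ^ 2 * (a ^ 3 - 1) = (a ^ 3 - 1) ^ 3 by ring]


/-- Emptiness of the intersection `𝒱_{I0}[12,34] ∩ 𝒱_{I0}[13,24]` of the two
Diagram I zero-inertia mass sets: the displayed polynomial system has no
solution with `μ₂, μ₃, μ₄ > 0` and the stated nondegeneracy. -/
theorem no_solution_diagram_I_zero_inertia_system :
    ¬ ∃ (μ₂ μ₃ μ₄ σ₁ σ₂ σ₃ σ₄ : ℝ),
      0 < μ₂ ∧ 0 < μ₃ ∧ 0 < μ₄ ∧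
      (σ₁ = -1 ∨ σ₁ = 1) ∧ (σ₂ = -1 ∨ σ₂ = 1) ∧
      (σ₃ = -1 ∨ σ₃ = 1) ∧ (σ₄ = -1 ∨ σ₄ = 1) ∧
      (μ₂ - 1) * (μ₃ - 1) * (μ₂ - μ₄) * (μ₃ - μ₄) ≠ 0 ∧
      (μ₃ ^ 3 + σ₁ * μ₄ ^ 3) + σ₂ * μ₂ ^ 3 * (μ₃ ^ 3 - σ₁ * μ₄ ^ 3) = 0 ∧
      (μ₂ ^ 3 + σ₃ * μ₄ ^ 3) + σ₄ * μ₃ ^ 3 * (μ₂ ^ 3 - σ₃ * μ₄ ^ 3) = 0 ∧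
      μ₂ ^ 6 * (μ₃ ^ 2 - μ₄ ^ 2) = μ₃ ^ 6 * μ₄ ^ 6 * (1 - μ₂ ^ 2) ∧
      μ₃ ^ 6 * (μ₂ ^ 2 - μ₄ ^ 2) = μ₂ ^ 6 * μ₄ ^ 6 * (1 - μ₃ ^ 2) := by
  rintro ⟨a, b, d, s₁, s₂, s₃, s₄, ha, hb, hd, hs₁, hs₂, hs₃, hs₄, hne, h1, h2, h3, h4⟩
  have ha1 : a ≠ 1 := by rintro rfl; simp at hne
  have hb1 : b ≠ 1 := by rintro rfl; simp at hne
  have hA : 0 < a ^ 3 := by positivity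
  have hB : 0 < b ^ 3 := by positivity
  rcases branch ha hb hd ha1 hs₁ hs₂ h1 h3 with ⟨ha', hbd, e1⟩ | ⟨ha', hdb, e1⟩ <;>
    rcases branch hb ha hd hb1 hs₃ hs₄ h2 h4 with ⟨hb', had, e2⟩ | ⟨hb', hda, e2⟩
  · have hA1 : 1 < a ^ 3 := one_lt_pow₀ ha' (by norm_num)
    have hAB : a ^ 3 = b ^ 3 := by
      have : (a ^ 3 * b ^ 3 + a ^ 3 + b ^ 3 - 1) * (a ^ 3 - b ^ 3) = 0 := by
        linear_combination (b ^ 3 - 1) * e1 - (a ^ 3 - 1) * e2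
      have hp := mul_pos hA hB
      rcases mul_eq_zero.1 this with h | h <;> linarith
    obtain rfl : a = b := (pow_left_inj₀ ha.le hb.le (by norm_num)).1 hAB
    exact false_of_one_lt_of_eq ha' had e1 h3
  · exact false_of_opposite hb hd ha' hb' e1 e2 h3
  · exact false_of_opposite ha hd hb' ha' e2 e1 h4
  · have hA1 : a ^ 3 < 1 := pow_lt_one₀ ha.le ha' (by norm_num)
    have hAB : a ^ 3 = b ^ 3 := by
      have : (1 + a ^ 3 + b ^ 3 - a ^ 3 * b ^ 3) * (a ^ 3 - b ^ 3) = 0 := by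
        linear_combination (1 + b ^ 3) * e1 - (1 + a ^ 3) * e2
      rcases mul_eq_zero.1 this with h | h
      · nlinarith
      · linarith
    obtain rfl : a = b := (pow_left_inj₀ ha.le hb.le (by norm_num)).1 hAB
    exact false_of_lt_one_of_eq hd hda e1 h3
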